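/- Let k, m be positive integers, let 1 ≤ i ≤ k and let j, ℓ ≥ 0 be integers with i + j + ℓ > m + k. Then in R(k,m) one has (x_1·x_2·…·x_i)^ℓ · h_j(x_1,…,x_i) = 0, where h_j denotes the complete homogeneous symmetric polynomial of degree j in the variables x_1,…,x_i. In particular (x_1·…·x_i)^ℓ = 0 whenever i + ℓ > m + k. -/

import Mathlib

/-!
Write `h_d(n)` for `h_d(x_1, …, x_n)` and `P_n = x_1 ⋯ x_n`. The argument rests on the recurrence
`h_{d+1}(n+1) = h_{d+1}(n) + x_{n+1} h_d(n+1)` (`completeHomog_concat`).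

The defining relations say `h_d(n) = 0` for `d + n = m + k + 1` and `1 ≤ n ≤ k`; the recurrence
extends this to all `d + n > m + k` (`completeHomog_eq_zero_of_relations`), which is the case
`ℓ = 0`. For the step from `ℓ` to `ℓ + 1`, the recurrence gives
`P_n^{ℓ+1} h_j(n) = P_n^ℓ P_{n-1} h_{j+1}(n) - x_n^ℓ P_{n-1}^{ℓ+1} h_{j+1}(n-1)`,
where the first term vanishes by induction on `ℓ` and the second by induction on `n`
(`prod_pow_mul_completeHomog_eq_zero`).
-/

open scoped TensorProduct

/-- Complete homogeneous symmetric polynomial of degree `d` in a list of elements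
of a commutative (semi)ring: `h_d(l)`. -/
noncomputable def completeHomog {R : Type*} [CommSemiring R] : List R → ℕ → R
  | [], 0 => 1
  | [], _ + 1 => 0
  | x :: l, d => ∑ t ∈ Finset.range (d + 1), x ^ t * completeHomog l (d - t)

/-- Elementary symmetric polynomial of degree `d` in a list of elements: `e_d(l)`. -/
noncomputable def elemSymm {R : Type*} [CommSemiring R] : List R → ℕ → R
  | _, 0 => 1
  | [], _ + 1 => 0
  | x :: l, d + 1 => elemSymm l (d + 1) + x * elemSymm l d

/-- The ideal of `(ZMod 2)[x_1, …, x_k]` generated by the complete homogeneous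
symmetric polynomials `h_{m+i}(x_1, …, x_{k+1-i})` for `1 ≤ i ≤ k`. -/
noncomputable def flagIdeal (k m : ℕ) : Ideal (MvPolynomial (Fin k) (ZMod 2)) :=
  Ideal.span { p | ∃ i : ℕ, 1 ≤ i ∧ i ≤ k ∧
    p = completeHomog (((List.finRange k).take (k + 1 - i)).map MvPolynomial.X) (m + i) }

/-- `R(k,m)`, the quotient of `(ZMod 2)[x_1, …, x_k]` by `flagIdeal k m`;
this is the mod-2 cohomology ring of the real flag manifold `F(1^k, m)`. -/
abbrev FlagRing (k m : ℕ) : Type :=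
  MvPolynomial (Fin k) (ZMod 2) ⧸ flagIdeal k m

/-- The image of the variable `x_{j+1}` in `R(k,m)` (`j` is 0-indexed). -/
noncomputable def xGen (k m : ℕ) (j : Fin k) : FlagRing k m :=
  Ideal.Quotient.mk (flagIdeal k m) (MvPolynomial.X j)

/-- The zero-divisor `z_{j+1} = x_{j+1} ⊗ 1 + 1 ⊗ x_{j+1}` in `R(k,m) ⊗ R(k,m)`. -/
noncomputable def zGen (k m : ℕ) (j : Fin k) :
    FlagRing k m ⊗[ZMod 2] FlagRing k m :=
  xGen k m j ⊗ₜ 1 + 1 ⊗ₜ xGen k m j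

/-- `x_{i+1,j+1}` in the `s`-fold tensor power `R(k,m)^{⊗ s}`: the element having
`x_{j+1}` in the `(i+1)`-st tensor factor and `1` elsewhere (`i`, `j` 0-indexed). -/
noncomputable def xT (k m s : ℕ) (i : Fin s) (j : Fin k) :
    ⨂[ZMod 2] _ : Fin s, FlagRing k m :=
  PiTensorProduct.tprod (ZMod 2) (fun t => if t = i then xGen k m j else 1)

/-- The `s`-th zero-divisor `z_{i+1,j+1} = x_{1,j+1} + x_{i+1,j+1}` in `R(k,m)^{⊗ s}`. -/
noncomputable def zT (k m s : ℕ) (hs : 0 < s) (i : Fin s) (j : Fin k) :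
    ⨂[ZMod 2] _ : Fin s, FlagRing k m :=
  xT k m s ⟨0, hs⟩ j + xT k m s i j

theorem completeHomog_zero_right {R : Type*} [CommSemiring R] (l : List R) :
    completeHomog l 0 = 1 := by
  induction l with
  | nil => simp [completeHomog]
  | cons x l ih => simp [completeHomog, ih]

theorem completeHomog_cons_succ {R : Type*} [CommSemiring R] (x : R) (l : List R) (d : ℕ) :
    completeHomog (x :: l) (d + 1) = completeHomog l (d + 1) + x * completeHomog (x :: l) d := by
  simp only [completeHomog]
  rw [Finset.sum_range_succ', Finset.mul_sum, add_comm]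
  congr 1
  · simp
  · refine Finset.sum_congr rfl fun t _ => ?_
    rw [Nat.add_sub_add_right, pow_succ]
    ring

/-- The recurrence splitting off the last variable; the definition of `completeHomog` only
gives the version for the first one. -/
theorem completeHomog_concat {R : Type*} [CommSemiring R] (x : R) (l : List R) (d : ℕ) :
    completeHomog (l ++ [x]) (d + 1) =
      completeHomog l (d + 1) + x * completeHomog (l ++ [x]) d := by
  induction l generalizing d with
  | nil => exact completeHomog_cons_succ x [] d
  | cons y l ihl =>
    simp only [List.cons_append]
    induction d with
    | zero =>
      rw [completeHomog_cons_succ, completeHomog_cons_succ, ihl]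
      simp only [completeHomog_zero_right]
      ring
    | succ d ihd =>
      rw [completeHomog_cons_succ, ihl, ihd, completeHomog_cons_succ y l (d + 1),
        mul_add x, mul_add y]
      have h := completeHomog_cons_succ y (l ++ [x]) d
      have h' : x * completeHomog (y :: l) (d + 1) +
          x * (x * completeHomog (y :: (l ++ [x])) d) =
          x * completeHomog (l ++ [x]) (d + 1) +
            x * (y * completeHomog (y :: (l ++ [x])) d) := by
        rw [← mul_add, ← mul_add, ← ihd, h]
      rw [h']
      ring

theorem map_completeHomog {R S : Type*} [CommSemiring R] [CommSemiring S] (f : R →+* S)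
    (l : List R) (d : ℕ) : f (completeHomog l d) = completeHomog (l.map f) d := by
  induction l generalizing d with
  | nil => cases d <;> simp [completeHomog]
  | cons x l ih => simp [completeHomog, ih]

section Chain

variable {R : Type*} [CommRing R] {k N : ℕ} {a : ℕ → List R}

/-- If `a n` is the list of the first `n` variables and `h_d(a n) = 0` on the line `d + n = N + 1`,
then `h_d(a n) = 0` on the whole half-plane `d + n > N`. -/
theorem completeHomog_eq_zero_of_relations (h0 : a 0 = [])
    (hs : ∀ n < k, ∃ x, a (n + 1) = a n ++ [x])
    (hrel : ∀ n d, 1 ≤ n → n ≤ k → n + d = N + 1 → completeHomog (a n) d = 0) (hN : k ≤ N)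
    (n d : ℕ) (hn : n ≤ k) (hd : N < n + d) : completeHomog (a n) d = 0 := by
  induction n generalizing d with
  | zero =>
    obtain ⟨d, rfl⟩ : ∃ e, d = e + 1 := ⟨d - 1, by omega⟩
    simp [h0, completeHomog]
  | succ n ihn =>
    induction d with
    | zero => omega
    | succ d ihd =>
      by_cases hd' : n + 1 + (d + 1) = N + 1
      · exact hrel _ _ (by omega) hn hd'
      · obtain ⟨x, hx⟩ := hs n (by omega)
        have h1 := ihd (by omega)
        rw [hx] at h1 ⊢
        rw [completeHomog_concat, h1, ihn (d + 1) (by omega) (by omega)]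
        simp

/-- The condition `0 < n + j` excludes `h_0` of no variables, which is `1`. -/
theorem prod_pow_mul_completeHomog_eq_zero (h0 : a 0 = [])
    (hs : ∀ n < k, ∃ x, a (n + 1) = a n ++ [x])
    (hrel : ∀ n d, 1 ≤ n → n ≤ k → n + d = N + 1 → completeHomog (a n) d = 0) (hN : k ≤ N)
    (ℓ n j : ℕ) (hn : n ≤ k) (hnj : 0 < n + j) (h : N < n + j + ℓ) :
    (a n).prod ^ ℓ * completeHomog (a n) j = 0 := by
  induction ℓ generalizing n j with
  | zero =>
    rw [completeHomog_eq_zero_of_relations h0 hs hrel hN n j hn (by omega), mul_zero]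
  | succ ℓ ihℓ =>
    induction n generalizing j with
    | zero =>
      obtain ⟨j, rfl⟩ : ∃ e, j = e + 1 := ⟨j - 1, by omega⟩
      simp [h0, completeHomog]
    | succ n ihn =>
      obtain ⟨x, hx⟩ := hs n (by omega)
      have h1 := ihℓ (n + 1) (j + 1) hn (by omega) (by omega)
      have h2 := ihn (j + 1) (by omega) (by omega) (by omega)
      have h3 := completeHomog_concat x (a n) j
      rw [hx] at h1 ⊢
      simp only [List.prod_append, List.prod_singleton] at h1 ⊢
      linear_combination (a n).prod * h1 - x ^ ℓ * h2 - ((a n).prod * x) ^ ℓ * (a n).prod * h3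

end Chain

/-- for `1 ≤ i ≤ k` and `j, ℓ ≥ 0` with `i + j + ℓ > m + k`, one has
`(x_1 ⋯ x_i)^ℓ · h_j(x_1, …, x_i) = 0` in `R(k,m)`; in particular `(x_1 ⋯ x_i)^ℓ = 0`
whenever `i + ℓ > m + k`. -/
theorem statement5 (k m : ℕ) (hk : 0 < k) (hm : 0 < m) (i j ℓ : ℕ)
    (hi1 : 1 ≤ i) (hik : i ≤ k) (h : m + k < i + j + ℓ) :
    ((((List.finRange k).take i).map (xGen k m)).prod ^ ℓ *
      completeHomog (((List.finRange k).take i).map (xGen k m)) j = 0) ∧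
    (∀ i' ℓ' : ℕ, 1 ≤ i' → i' ≤ k → m + k < i' + ℓ' →
      (((List.finRange k).take i').map (xGen k m)).prod ^ ℓ' = 0) := by
  have hs : ∀ n < k, ∃ x, ((List.finRange k).take (n + 1)).map (xGen k m) =
      ((List.finRange k).take n).map (xGen k m) ++ [x] := by
    intro n hn
    refine ⟨xGen k m ⟨n, hn⟩, ?_⟩
    rw [List.take_succ_eq_append_getElem (by simpa using hn)]
    simp
  have hrel : ∀ n d, 1 ≤ n → n ≤ k → n + d = m + k + 1 →
      completeHomog (((List.finRange k).take n).map (xGen k m)) d = 0 := by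
    intro n d hn1 hnk hd
    have hmem : completeHomog (((List.finRange k).take n).map MvPolynomial.X) d ∈
        flagIdeal k m := by
      refine Ideal.subset_span ⟨k + 1 - n, by omega, by omega, ?_⟩
      rw [show k + 1 - (k + 1 - n) = n by omega, show m + (k + 1 - n) = d by omega]
    have h1 := Ideal.Quotient.eq_zero_iff_mem.mpr hmem
    rw [map_completeHomog, List.map_map] at h1
    exact h1
  have main := prod_pow_mul_completeHomog_eq_zero (N := m + k)
    (a := fun n => ((List.finRange k).take n).map (xGen k m)) (by simp) hs hrel (by omega)
  refine ⟨main ℓ i j hik (by omega) h, fun i' ℓ' hi' hik' h' => ?_⟩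
  have h0 := main ℓ' i' 0 hik' (by omega) (by omega)
  rwa [completeHomog_zero_right, mul_one] at h0
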